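/- For s ∈ (3/2, 2), every embedded curve γ ∈ H^s(𝕋, ℝⁿ) (injective with |γ'| > 0 everywhere) satisfies π² ≤ E(γ) · L(γ)^{2s−3}. -/

import Mathlib

open MeasureTheory Real Filter Set
open scoped ENNReal Topology RealInnerProductSpace

noncomputable section

/-- Euclidean space `ℝⁿ`. -/
abbrev En (n : ℕ) : Type := EuclideanSpace ℝ (Fin n)

/-- A fundamental domain for the circle `𝕋 = ℝ/ℤ`. -/
def I01 : Set ℝ := Set.Ico (0 : ℝ) 1

/-- The intrinsic distance on `𝕋 = ℝ/ℤ`, expressed for real representatives. -/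
def dT (x y : ℝ) : ℝ := ⨅ k : ℤ, |x - y - (k : ℝ)|

/-- Supremum norm of a (periodic) function on the circle. -/
def supNorm {E : Type*} [NormedAddCommGroup E] (f : ℝ → E) : ℝ := ⨆ x : ℝ, ‖f x‖

/-- The squared Gagliardo seminorm `[v]_{H^σ}²` of a function on the circle, valued in `[0,∞]`. -/
def gagliardoSqE {E : Type*} [NormedAddCommGroup E] (σ : ℝ) (v : ℝ → E) : ℝ≥0∞ :=
  ∫⁻ x in I01, ∫⁻ y in I01, ENNReal.ofReal (‖v y - v x‖ ^ 2 / dT x y ^ (2 * σ + 1))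

/-- Membership in the Sobolev–Slobodeckij space `H^s(𝕋, ℝⁿ)`; for `s ∈ (3/2,2)` such
functions have a `C¹` representative, which we take as the defining data. -/
def InHs {n : ℕ} (s : ℝ) (u : ℝ → En n) : Prop :=
  Function.Periodic u 1 ∧ ContDiff ℝ 1 u ∧ gagliardoSqE (s - 1) (deriv u) < ⊤

/-- The squared `H^s` norm `‖u‖²_{L²} + ‖u'‖²_{L²} + [u']²_{H^{s-1}}`. -/
def HsNormSq {n : ℕ} (s : ℝ) (u : ℝ → En n) : ℝ :=
  (∫ x in I01, ‖u x‖ ^ 2) + (∫ x in I01, ‖deriv u x‖ ^ 2) +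
    (gagliardoSqE (s - 1) (deriv u)).toReal

/-- The `H^s` norm. -/
def HsNorm {n : ℕ} (s : ℝ) (u : ℝ → En n) : ℝ := Real.sqrt (HsNormSq s u)

/-- The `H^s` inner product. -/
def HsInner {n : ℕ} (s : ℝ) (u v : ℝ → En n) : ℝ :=
  (∫ x in I01, ⟪u x, v x⟫) + (∫ x in I01, ⟪deriv u x, deriv v x⟫) +
    ∫ x in I01, ∫ y in I01,
      ⟪deriv u y - deriv u x, deriv v y - deriv v x⟫ / dT x y ^ (2 * (s - 1) + 1)

/-- The manifold `𝓜` of embedded closed curves of class `H^s`: injective (on the circle)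
immersions. -/
def InM {n : ℕ} (s : ℝ) (γ : ℝ → En n) : Prop :=
  InHs s γ ∧ Set.InjOn γ I01 ∧ ∀ x, deriv γ x ≠ 0

/-- The length `L(γ)`. -/
def arcLen {n : ℕ} (γ : ℝ → En n) : ℝ := ∫ x in I01, ‖deriv γ x‖

/-- The arc-length distance `d_γ(x,y)`: the length of the shorter of the two arcs of `γ`
between `x` and `y`. -/
def arcDist {n : ℕ} (γ : ℝ → En n) (x y : ℝ) : ℝ :=
  ⨅ k : ℤ, |∫ t in x..(y + (k : ℝ)), ‖deriv γ t‖|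

/-- Derivative with respect to arc length, `D_γ u = u' / |γ'|`. -/
def Dg {n : ℕ} (γ u : ℝ → En n) (x : ℝ) : En n := ‖deriv γ x‖⁻¹ • deriv u x

/-- `𝒟_γ u (x)`, the pointwise linear map `w ↦ |γ'(x)|⁻² ⟪γ'(x), w⟫ u'(x)`. -/
def DDg {n : ℕ} (γ u : ℝ → En n) (x : ℝ) (w : En n) : En n :=
  ((‖deriv γ x‖ ^ 2)⁻¹ * ⟪deriv γ x, w⟫) • deriv u x

/-- The operator `R^s_γ`. -/
def Rop {n : ℕ} (s : ℝ) (γ u : ℝ → En n) (x y : ℝ) : En n :=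
  (‖γ y - γ x‖ ^ s)⁻¹ • (u y - u x - DDg γ u x (γ y - γ x))

/-- Density of the measure `μ_γ` with respect to `λ ⊗ λ` on `𝕋 × 𝕋`. -/
def muW {n : ℕ} (γ : ℝ → En n) (x y : ℝ) : ℝ :=
  ‖deriv γ x‖ * ‖deriv γ y‖ / ‖γ y - γ x‖

/-- Density of the measure `ν_γ` with respect to `λ ⊗ λ` on `𝕋 × 𝕋`. -/
def nuW {n : ℕ} (γ : ℝ → En n) (x y : ℝ) : ℝ :=
  ‖deriv γ x‖ * ‖deriv γ y‖ / arcDist γ x y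

/-- The tangent-point energy, valued in `[0,∞]`. -/
def EtpE {n : ℕ} (s : ℝ) (γ : ℝ → En n) : ℝ≥0∞ :=
  ∫⁻ x in I01, ∫⁻ y in I01, ENNReal.ofReal (‖Rop s γ γ x y‖ ^ 2 * muW γ x y)

/-- The tangent-point energy, real-valued (finite on `𝓜`). -/
def Etp {n : ℕ} (s : ℝ) (γ : ℝ → En n) : ℝ := (EtpE s γ).toReal

/-- `‖R^s_γ u‖²_{L²(ν_γ)}`, valued in `[0,∞]`. -/
def RnuSqE {n : ℕ} (s : ℝ) (γ u : ℝ → En n) : ℝ≥0∞ :=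
  ∫⁻ x in I01, ∫⁻ y in I01, ENNReal.ofReal (‖Rop s γ u x y‖ ^ 2 * nuW γ x y)

/-- `‖R^s_γ u‖²_{L²(ν_γ)}`, real-valued. -/
def RnuSq {n : ℕ} (s : ℝ) (γ u : ℝ → En n) : ℝ := (RnuSqE s γ u).toReal

/-- The squared `γ`-dependent seminorm `[u]²_{H^s(γ)}`, valued in `[0,∞]`. -/
def gagGammaSqE {n : ℕ} (s : ℝ) (γ u : ℝ → En n) : ℝ≥0∞ :=
  ∫⁻ x in I01, ∫⁻ y in I01,
    ENNReal.ofReal (‖Dg γ u y - Dg γ u x‖ ^ 2 / arcDist γ x y ^ (2 * (s - 1)) * nuW γ x y)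

/-- The squared `γ`-dependent seminorm `[u]²_{H^s(γ)}`, real-valued. -/
def gagGammaSq {n : ℕ} (s : ℝ) (γ u : ℝ → En n) : ℝ := (gagGammaSqE s γ u).toReal

/-- The inner product `⟨u,v⟩_{L²(γ)}`. -/
def innerL2g {n : ℕ} (γ u v : ℝ → En n) : ℝ := ∫ x in I01, ⟪u x, v x⟫ * ‖deriv γ x‖

/-- The inner product `⟨u,v⟩_{H¹(γ)}`. -/
def innerH1g {n : ℕ} (γ u v : ℝ → En n) : ℝ :=
  ∫ x in I01, ⟪Dg γ u x, Dg γ v x⟫ * ‖deriv γ x‖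

/-- The squared `γ`-dependent norm `‖u‖²_{H^s(γ)}`. -/
def HsGammaNormSq {n : ℕ} (s : ℝ) (γ u : ℝ → En n) : ℝ :=
  innerL2g γ u u + innerH1g γ u u + gagGammaSq s γ u

/-- The `γ`-dependent norm `‖u‖_{H^s(γ)}`. -/
def HsGammaNorm {n : ℕ} (s : ℝ) (γ u : ℝ → En n) : ℝ := Real.sqrt (HsGammaNormSq s γ u)

/-- The bilinear form `B¹_γ`. -/
def B1 {n : ℕ} (s : ℝ) (γ u v : ℝ → En n) : ℝ :=
  ∫ x in I01, ∫ y in I01, ⟪Rop s γ u x y, Rop s γ v x y⟫ * muW γ x y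

/-- The bilinear form `B²_γ`. -/
def B2 {n : ℕ} (s : ℝ) (γ u v : ℝ → En n) : ℝ :=
  ∫ x in I01, ∫ y in I01,
    ‖Rop s γ γ x y‖ ^ 2 * (⟪u y - u x, v y - v x⟫ / ‖γ y - γ x‖ ^ 2) * muW γ x y

/-- The bilinear form `B³_γ`. -/
def B3 {n : ℕ} (s : ℝ) (γ u v : ℝ → En n) : ℝ :=
  ∫ x in I01, ∫ y in I01,
    ‖Rop s γ γ x y‖ ^ 2 * (⟪Dg γ u x, Dg γ v x⟫ + ⟪Dg γ u y, Dg γ v y⟫) * muW γ x y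

/-- The Riemannian metric `G_γ(u,v)`. -/
def Gmet {n : ℕ} (s : ℝ) (γ u v : ℝ → En n) : ℝ :=
  2 * B1 s γ u v + (2 * s + 1) * B2 s γ u v + B3 s γ u v + innerH1g γ u v + innerL2g γ u v

/-- The distortion `distor(γ) = sup_{x ≠ y} d_γ(x,y)/|γ(y) − γ(x)|`, valued in `[0,∞]`. -/
def distorE {n : ℕ} (γ : ℝ → En n) : ℝ≥0∞ :=
  ⨆ (x ∈ I01) (y ∈ I01) (_ : x ≠ y), ENNReal.ofReal (arcDist γ x y / ‖γ y - γ x‖)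

/-- The distortion, real-valued. -/
def distor {n : ℕ} (γ : ℝ → En n) : ℝ := (distorE γ).toReal

/-- A `C¹` path `[0,1] → 𝓜 ⊂ H^s(𝕋,ℝⁿ)` (with respect to the `H^s` topology), recorded
together with its velocity field `V`. -/
structure C1Path (s : ℝ) (n : ℕ) where
  Γ : ℝ → ℝ → En n
  V : ℝ → ℝ → En n
  mem : ∀ t ∈ Set.Icc (0 : ℝ) 1, InM s (Γ t)
  memV : ∀ t ∈ Set.Icc (0 : ℝ) 1, InHs s (V t)
  isDeriv : ∀ t ∈ Set.Icc (0 : ℝ) 1,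
    Tendsto (fun h : ℝ => HsNorm s fun x => h⁻¹ • (Γ (t + h) x - Γ t x) - V t x)
      (𝓝[{h : ℝ | t + h ∈ Set.Icc (0 : ℝ) 1 ∧ h ≠ 0}] 0) (𝓝 0)
  contV : ∀ t ∈ Set.Icc (0 : ℝ) 1,
    Tendsto (fun τ : ℝ => HsNorm s fun x => V τ x - V t x) (𝓝[Set.Icc (0 : ℝ) 1] t) (𝓝 0)

/-- Length of a path with respect to `G`. -/
def pathLen {s : ℝ} {n : ℕ} (P : C1Path s n) : ℝ :=
  ∫ t in (0 : ℝ)..1, Real.sqrt (Gmet s (P.Γ t) (P.V t) (P.V t))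

/-- The path (Dirichlet) energy of a path with respect to `G`. -/
def pathEnergy {s : ℝ} {n : ℕ} (P : C1Path s n) : ℝ :=
  (1 / 2) * ∫ t in (0 : ℝ)..1, Gmet s (P.Γ t) (P.V t) (P.V t)

/-- The geodesic distance induced by `G`, valued in `[0,∞]` (`∞` if there is no path). -/
def geodDist (s : ℝ) {n : ℕ} (γ₀ γ₁ : ℝ → En n) : ℝ≥0∞ :=
  ⨅ (P : C1Path s n) (_ : P.Γ 0 = γ₀ ∧ P.Γ 1 = γ₁), ENNReal.ofReal (pathLen P)

/-- `U ⊆ 𝓜` is bounded with respect to the geodesic distance `d_G`. -/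
def GBounded (s : ℝ) {n : ℕ} (U : Set (ℝ → En n)) : Prop :=
  (∀ γ ∈ U, InM s γ) ∧
    ∃ γ₀, InM s γ₀ ∧ ∃ R : ℝ, ∀ γ ∈ U, geodDist s γ γ₀ ≤ ENNReal.ofReal R

/-- Weak convergence in the Hilbert space `H^s(𝕋,ℝⁿ)`. -/
def WeakHsTendsto {n : ℕ} (s : ℝ) (γk : ℕ → ℝ → En n) (γ : ℝ → En n) : Prop :=
  ∀ v : ℝ → En n, InHs s v →
    Tendsto (fun k => HsInner s (γk k) v) atTop (𝓝 (HsInner s γ v))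

/-- Directional derivative of `γ ↦ G_γ(u,v)` at `γ` in direction `w`. -/
def DGdir {n : ℕ} (s : ℝ) (γ w u v : ℝ → En n) : ℝ :=
  deriv (fun t : ℝ => Gmet s (fun x => γ x + t • w x) u v) 0

/-- `F'` is the derivative of the path `F` with respect to the `H^s` norm, on `S`. -/
def IsHsDerivOn {n : ℕ} (s : ℝ) (F F' : ℝ → ℝ → En n) (S : Set ℝ) : Prop :=
  ∀ t ∈ S,
    Tendsto (fun h : ℝ => HsNorm s fun x => h⁻¹ • (F (t + h) x - F t x) - F' t x)
      (𝓝[{h : ℝ | t + h ∈ S ∧ h ≠ 0}] 0) (𝓝 0)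

/-- The path `F` is continuous on `S` with respect to the `H^s` norm. -/
def HsContOn {n : ℕ} (s : ℝ) (F : ℝ → ℝ → En n) (S : Set ℝ) : Prop :=
  ∀ t ∈ S, Tendsto (fun τ : ℝ => HsNorm s fun x => F τ x - F t x) (𝓝[S] t) (𝓝 0)

/-- A solution of the geodesic initial value problem on `[0,∞)`, recorded as a triple
(position `Γ`, velocity `V`, acceleration `W`); the geodesic equation
`Γ̈ + A_Γ(Γ̇)Γ̇ = 0` is expressed weakly via the Koszul formula for the
Christoffel operator `A`. -/
def GeodesicSol {n : ℕ} (s : ℝ) (γ₀ v₀ : ℝ → En n) (Γ V W : ℝ → ℝ → En n) : Prop :=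
  (∀ t ∈ Set.Ici (0 : ℝ), InM s (Γ t) ∧ InHs s (V t) ∧ InHs s (W t)) ∧
  Γ 0 = γ₀ ∧ V 0 = v₀ ∧
  IsHsDerivOn s Γ V (Set.Ici 0) ∧ IsHsDerivOn s V W (Set.Ici 0) ∧
  HsContOn s V (Set.Ici 0) ∧ HsContOn s W (Set.Ici 0) ∧
  ∀ t ∈ Set.Ici (0 : ℝ), ∀ w : ℝ → En n, InHs s w →
    Gmet s (Γ t) (W t) w + DGdir s (Γ t) (V t) (V t) w
      - (1 / 2) * DGdir s (Γ t) w (V t) (V t) = 0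

/-!
Fix a pole `γ b`. As `x` runs from `b` to `b + 1`, the unit direction `u` of the chord from `γ b` to
`γ x` moves on the unit sphere from the tangent at the pole to its opposite, so the length
`∫ |u'|` of its path is at least `π`. Computing the area of the parallelogram spanned by the chord
and `γ'(x)` in two ways identifies `|R^s_γ γ (x, b)|² μ_γ(x, b)` with
`|γ x - γ b|^(3-2s) |γ'(b)| |u'(x)|² / |γ'(x)|`. The Cauchy–Schwarz inequality gives
`π² ≤ (∫ |u'|² / |γ'|) L`, and a chord is at most `L / 2` long. It remains to integrate over all
poles `b`.
-/

open InnerProductGeometry NormedSpace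

section Projection

variable {E : Type*} [NormedAddCommGroup E] [InnerProductSpace ℝ E]

theorem norm_sq_mul_norm_starProjection_orthogonal_sq (v w : E) :
    ‖v‖ ^ 2 * ‖(ℝ ∙ v)ᗮ.starProjection w‖ ^ 2 = ‖v‖ ^ 2 * ‖w‖ ^ 2 - ⟪v, w⟫ ^ 2 := by
  rcases eq_or_ne v 0 with rfl | hv
  · simp
  have hv' : ‖v‖ ≠ 0 := norm_ne_zero_iff.2 hv
  have hproj : ‖(ℝ ∙ v).starProjection w‖ ^ 2 = ⟪v, w⟫ ^ 2 / ‖v‖ ^ 2 := by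
    rw [Submodule.starProjection_singleton, norm_smul, mul_pow, Real.norm_eq_abs, sq_abs]
    simp only [RCLike.ofReal_real_eq_id, id_eq]
    field_simp
  rw [(ℝ ∙ v).norm_sq_eq_add_norm_sq_starProjection w, hproj]
  field_simp
  ring

/-- Base times height of the parallelogram spanned by `v` and `w`, computed from either side. -/
theorem norm_mul_norm_starProjection_orthogonal_comm (v w : E) :
    ‖v‖ * ‖(ℝ ∙ v)ᗮ.starProjection w‖ = ‖w‖ * ‖(ℝ ∙ w)ᗮ.starProjection v‖ := by
  rw [← sq_eq_sq₀ (by positivity) (by positivity), mul_pow, mul_pow,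
    norm_sq_mul_norm_starProjection_orthogonal_sq, norm_sq_mul_norm_starProjection_orthogonal_sq,
    real_inner_comm v w, mul_comm (‖v‖ ^ 2)]

theorem abs_inner_le_sqrt_mul_norm_of_inner_eq_zero {e u v : E} (he : ‖e‖ = 1) (hu : ‖u‖ = 1)
    (huv : ⟪u, v⟫ = 0) : |⟪e, v⟫| ≤ √(1 - ⟪e, u⟫ ^ 2) * ‖v‖ := by
  have hperp : ‖(ℝ ∙ u)ᗮ.starProjection e‖ = √(1 - ⟪e, u⟫ ^ 2) := by
    have := norm_sq_mul_norm_starProjection_orthogonal_sq u e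
    rw [he, hu, real_inner_comm] at this
    rw [← Real.sqrt_sq (norm_nonneg ((ℝ ∙ u)ᗮ.starProjection e))]
    congr 1
    linarith
  have hinner : ⟪(ℝ ∙ u)ᗮ.starProjection e, v⟫ = ⟪e, v⟫ := by
    rw [Submodule.starProjection_orthogonal_val, Submodule.starProjection_unit_singleton ℝ hu,
      inner_sub_left, real_inner_smul_left, huv, mul_zero, sub_zero]
  rw [← hinner, ← hperp]
  exact abs_real_inner_le_norm _ _

end Projection

section Normalize

variable {E : Type*} [NormedAddCommGroup E] [InnerProductSpace ℝ E] {f : ℝ → E} {f' : E} {x : ℝ}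

theorem hasDerivAt_normalize (hf : HasDerivAt f f' x) (hx : f x ≠ 0) :
    HasDerivAt (fun t => normalize (f t)) (‖f x‖⁻¹ • (ℝ ∙ f x)ᗮ.starProjection f') x := by
  have hN : ‖f x‖ ≠ 0 := norm_ne_zero_iff.2 hx
  have hnorm : HasDerivAt (fun t => ‖f t‖) (⟪f x, f'⟫ / ‖f x‖) x := by
    have h := hf.norm_sq.sqrt (pow_ne_zero 2 hN)
    simp only [Real.sqrt_sq (norm_nonneg _)] at h
    convert h using 1
    field_simp
  have hsmul : HasDerivAt (fun t => normalize (f t)) _ x := (hnorm.fun_inv hN).smul hf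
  convert hsmul using 1
  rw [Submodule.starProjection_orthogonal_val, Submodule.starProjection_singleton]
  simp only [RCLike.ofReal_real_eq_id, id_eq]
  module

theorem continuousAt_normalize {v : E} (hv : v ≠ 0) : ContinuousAt (normalize : E → E) v :=
  (continuousAt_id.norm.inv₀ (norm_ne_zero_iff.2 hv)).smul continuousAt_id

theorem tendsto_normalize_sub_nhdsGT (hf : HasDerivAt f f' x) (hf' : f' ≠ 0) :
    Tendsto (fun t => normalize (f t - f x)) (𝓝[>] x) (𝓝 (normalize f')) := by
  have hslope := (hasDerivAt_iff_tendsto_slope.1 hf).mono_left (nhdsGT_le_nhdsNE x)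
  refine ((continuousAt_normalize hf').tendsto.comp hslope).congr' ?_
  filter_upwards [self_mem_nhdsWithin] with t ht
  rw [Function.comp_apply, slope_def_module, normalize_smul_of_pos (inv_pos.2 (sub_pos.2 ht))]

theorem tendsto_normalize_sub_nhdsLT (hf : HasDerivAt f f' x) (hf' : f' ≠ 0) :
    Tendsto (fun t => normalize (f t - f x)) (𝓝[<] x) (𝓝 (-normalize f')) := by
  have hslope := (hasDerivAt_iff_tendsto_slope.1 hf).mono_left (nhdsLT_le_nhdsNE x)
  refine ((continuousAt_normalize hf').tendsto.comp hslope).neg.congr' ?_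
  filter_upwards [self_mem_nhdsWithin] with t ht
  rw [Function.comp_apply, slope_def_module, normalize_smul_of_neg (inv_lt_zero.2 (sub_neg.2 ht)),
    neg_neg]

end Normalize

section SphericalCurve

variable {E : Type*} [NormedAddCommGroup E] [InnerProductSpace ℝ E] {u : ℝ → E} {a b : ℝ}

theorem inner_deriv_eq_zero_of_eventually_norm_eq {x r : ℝ} (hu : DifferentiableAt ℝ u x)
    (hr : ∀ᶠ t in 𝓝 x, ‖u t‖ = r) : ⟪u x, deriv u x⟫ = 0 := by
  have hconst : (fun t => ‖u t‖ ^ 2) =ᶠ[𝓝 x] fun _ => r ^ 2 :=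
    hr.mono fun t ht => by simp only [ht]
  have h := hu.hasDerivAt.norm_sq.deriv
  rw [hconst.deriv_eq, deriv_const] at h
  linarith

theorem sqrt_one_sub_sq_le_sqrt_one_sub_mul_sq {c t : ℝ} (hc : c ∈ Ioo 0 1) (ht : |t| ≤ 1) :
    c * √(1 - t ^ 2) ≤ √(1 - (c * t) ^ 2) := by
  have ht' : t ^ 2 ≤ 1 := (sq_le_one_iff_abs_le_one t).2 ht
  apply Real.le_sqrt_of_sq_le
  rw [mul_pow, Real.sq_sqrt (by linarith)]
  nlinarith [hc.1, hc.2]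

theorem abs_const_mul_inner_lt_one {c : ℝ} (hc : c ∈ Ioo 0 1) {e v : E} (he : ‖e‖ = 1)
    (hv : ‖v‖ = 1) : |c * ⟪e, v⟫| < 1 := by
  have hle : |⟪e, v⟫| ≤ 1 := by simpa [he, hv] using abs_real_inner_le_norm e v
  rw [abs_mul, abs_of_pos hc.1]
  nlinarith [hc.1, hc.2]

theorem norm_deriv_arcsin_const_mul_inner_le {c x : ℝ} (hc : c ∈ Ioo 0 1) {e : E} (he : ‖e‖ = 1)
    (hu : DifferentiableAt ℝ u x) (hunit : ∀ᶠ t in 𝓝 x, ‖u t‖ = 1) :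
    ‖deriv (fun t => arcsin (c * ⟪e, u t⟫)) x‖ ≤ ‖deriv u x‖ := by
  have hux : ‖u x‖ = 1 := hunit.self_of_nhds
  have hlt := abs_const_mul_inner_lt_one hc he hux
  have hsqrt : 0 < √(1 - (c * ⟪e, u x⟫) ^ 2) :=
    Real.sqrt_pos.2 (sub_pos.2 ((sq_lt_one_iff_abs_lt_one _).2 hlt))
  have hinner : HasDerivAt (fun t => ⟪e, u t⟫) ⟪e, deriv u x⟫ x := by
    simpa using (hasDerivAt_const x e).inner ℝ hu.hasDerivAt
  have harcsin := (Real.hasDerivAt_arcsin (abs_lt.1 hlt).1.ne' (abs_lt.1 hlt).2.ne).comp x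
    (hinner.const_mul c)
  rw [show deriv (fun t => arcsin (c * ⟪e, u t⟫)) x = _ from harcsin.deriv, Real.norm_eq_abs,
    one_div_mul_eq_div, abs_div, abs_mul, abs_of_pos hc.1, abs_of_pos hsqrt, div_le_iff₀ hsqrt]
  calc c * |⟪e, deriv u x⟫| ≤ c * (√(1 - ⟪e, u x⟫ ^ 2) * ‖deriv u x‖) := by
        gcongr
        · exact hc.1.le
        · exact abs_inner_le_sqrt_mul_norm_of_inner_eq_zero he hux
            (inner_deriv_eq_zero_of_eventually_norm_eq hu hunit)
    _ = c * √(1 - ⟪e, u x⟫ ^ 2) * ‖deriv u x‖ := by ring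
    _ ≤ √(1 - (c * ⟪e, u x⟫) ^ 2) * ‖deriv u x‖ := by
        gcongr
        exact sqrt_one_sub_sq_le_sqrt_one_sub_mul_sq hc
          (by simpa [he, hux] using abs_real_inner_le_norm e (u x))
    _ = ‖deriv u x‖ * √(1 - (c * ⟪e, u x⟫) ^ 2) := mul_comm _ _

/-- The factor `c < 1` keeps the argument away from `±1`, where `arcsin` is not differentiable. -/
theorem ofReal_arcsin_sub_arcsin_le_lintegral_enorm_deriv {c : ℝ} (hc : c ∈ Ioo 0 1) {e : E}
    (he : ‖e‖ = 1) (hab : a ≤ b) (hu : ContDiffOn ℝ 1 u (Icc a b))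
    (hunit : ∀ x ∈ Icc a b, ‖u x‖ = 1) :
    ENNReal.ofReal (arcsin (c * ⟪e, u a⟫) - arcsin (c * ⟪e, u b⟫)) ≤
      ∫⁻ x in Icc a b, ‖deriv u x‖ₑ := by
  have hf : ContDiffOn ℝ 1 (fun t => arcsin (c * ⟪e, u t⟫)) (Icc a b) := fun x hx => by
    have hlt := abs_lt.1 (abs_const_mul_inner_lt_one hc he (hunit x hx))
    have hinner : ContDiffWithinAt ℝ 1 (fun t => c * ⟪e, u t⟫) (Icc a b) x :=
      contDiffWithinAt_const.mul (contDiffWithinAt_const.inner ℝ (hu x hx))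
    exact ContDiffAt.comp_contDiffWithinAt (g := arcsin) x
      (Real.contDiffAt_arcsin hlt.1.ne' hlt.2.ne) hinner
  calc ENNReal.ofReal (arcsin (c * ⟪e, u a⟫) - arcsin (c * ⟪e, u b⟫))
      ≤ ‖arcsin (c * ⟪e, u b⟫) - arcsin (c * ⟪e, u a⟫)‖ₑ := by
        rw [← ofReal_norm, norm_sub_rev]
        exact ENNReal.ofReal_le_ofReal (le_abs_self _)
    _ ≤ ∫⁻ x in Icc a b, ‖deriv (fun t => arcsin (c * ⟪e, u t⟫)) x‖ₑ :=
        enorm_sub_le_lintegral_deriv_of_contDiffOn_Icc hf hab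
    _ ≤ ∫⁻ x in Icc a b, ‖deriv u x‖ₑ := by
        rw [← restrict_Ioo_eq_restrict_Icc]
        refine setLIntegral_mono' measurableSet_Ioo fun x hx => enorm_le_iff_norm_le.2 ?_
        have hnhds : Icc a b ∈ 𝓝 x := Icc_mem_nhds hx.1 hx.2
        exact norm_deriv_arcsin_const_mul_inner_le hc he
          ((hu.contDiffAt hnhds).differentiableAt one_ne_zero) (eventually_of_mem hnhds hunit)

theorem ofReal_angle_le_lintegral_enorm_deriv_Icc (hab : a ≤ b) (hu : ContDiffOn ℝ 1 u (Icc a b))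
    (hunit : ∀ x ∈ Icc a b, ‖u x‖ = 1) :
    ENNReal.ofReal (angle (u a) (u b)) ≤ ∫⁻ x in Icc a b, ‖deriv u x‖ₑ := by
  have ha : ‖u a‖ = 1 := hunit a (left_mem_Icc.2 hab)
  have hb : ‖u b‖ = 1 := hunit b (right_mem_Icc.2 hab)
  have hangle : angle (u a) (u b) = arcsin (1 * ⟪u a, u a⟫) - arcsin (1 * ⟪u a, u b⟫) := by
    rw [angle, arccos_eq_pi_div_two_sub_arcsin, real_inner_self_eq_norm_sq, ha, hb]
    simp
  have hcont : Continuous fun c : ℝ =>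
      ENNReal.ofReal (arcsin (c * ⟪u a, u a⟫) - arcsin (c * ⟪u a, u b⟫)) :=
    ENNReal.continuous_ofReal.comp (by fun_prop)
  rw [hangle]
  refine le_of_tendsto ((hcont.tendsto 1).mono_left (nhdsWithin_le_nhds (s := Iio 1))) ?_
  filter_upwards [Ioo_mem_nhdsLT zero_lt_one] with c hc
  exact ofReal_arcsin_sub_arcsin_le_lintegral_enorm_deriv hc ha hab hu hunit

theorem tendsto_angle {α : Type*} {l : Filter α} {f g : α → E} {v w : E}
    (hf : Tendsto f l (𝓝 v)) (hg : Tendsto g l (𝓝 w)) (hv : v ≠ 0) (hw : w ≠ 0) :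
    Tendsto (fun t => angle (f t) (g t)) l (𝓝 (angle v w)) := by
  have h := (continuousAt_angle (x := (v, w)) hv hw).tendsto.comp (hf.prodMk_nhds hg)
  exact h

theorem ofReal_angle_le_lintegral_enorm_deriv_Ioo {v w : E} (hab : a < b)
    (hu : ContDiffOn ℝ 1 u (Ioo a b)) (hunit : ∀ x ∈ Ioo a b, ‖u x‖ = 1)
    (hv : Tendsto u (𝓝[>] a) (𝓝 v)) (hw : Tendsto u (𝓝[<] b) (𝓝 w)) :
    ENNReal.ofReal (angle v w) ≤ ∫⁻ x in Ioo a b, ‖deriv u x‖ₑ := by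
  have hv1 : ‖v‖ = 1 := by
    refine tendsto_nhds_unique hv.norm (tendsto_const_nhds.congr' ?_)
    filter_upwards [Ioo_mem_nhdsGT hab] with x hx using (hunit x hx).symm
  have hw1 : ‖w‖ = 1 := by
    refine tendsto_nhds_unique hw.norm (tendsto_const_nhds.congr' ?_)
    filter_upwards [Ioo_mem_nhdsLT hab] with x hx using (hunit x hx).symm
  have hangle : Tendsto (fun p : ℝ × ℝ => angle (u p.1) (u p.2)) (𝓝[>] a ×ˢ 𝓝[<] b)
      (𝓝 (angle v w)) :=
    tendsto_angle (hv.comp tendsto_fst) (hw.comp tendsto_snd)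
      (norm_ne_zero_iff.1 (hv1.trans_ne one_ne_zero))
      (norm_ne_zero_iff.1 (hw1.trans_ne one_ne_zero))
  obtain ⟨m, ham, hmb⟩ := exists_between hab
  refine le_of_tendsto (ENNReal.tendsto_ofReal hangle) ?_
  filter_upwards [prod_mem_prod (Ioo_mem_nhdsGT ham) (Ioo_mem_nhdsLT hmb)] with p hp
  obtain ⟨hp₁, hp₂⟩ := hp
  have hsub : Icc p.1 p.2 ⊆ Ioo a b := Icc_subset_Ioo hp₁.1 hp₂.2
  exact (ofReal_angle_le_lintegral_enorm_deriv_Icc (hp₁.2.trans hp₂.1).le (hu.mono hsub)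
    fun x hx => hunit x (hsub hx)).trans (lintegral_mono_set hsub)

end SphericalCurve

section CauchySchwarz

theorem sq_lintegral_le_lintegral_sq_div_mul_lintegral {α : Type*} [MeasurableSpace α]
    {μ : Measure α} {f g : α → ℝ≥0∞} (hf : AEMeasurable f μ) (hg : AEMeasurable g μ)
    (hg_zero : ∀ᵐ x ∂μ, g x ≠ 0) (hg_top : ∀ᵐ x ∂μ, g x ≠ ∞) :
    (∫⁻ x, f x ∂μ) ^ 2 ≤ (∫⁻ x, f x ^ 2 / g x ∂μ) * ∫⁻ x, g x ∂μ := by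
  have hsplit : ∫⁻ x, f x ∂μ = ∫⁻ x, (f x ^ 2 / g x) ^ (2⁻¹ : ℝ) * g x ^ (2⁻¹ : ℝ) ∂μ := by
    refine lintegral_congr_ae ?_
    filter_upwards [hg_zero, hg_top] with x h_zero h_top
    rw [← ENNReal.mul_rpow_of_nonneg _ _ (by norm_num), ENNReal.div_mul_cancel h_zero h_top,
      ← ENNReal.rpow_natCast_mul]
    simp
  have hhoelder := ENNReal.lintegral_mul_norm_pow_le ((hf.pow_const 2).div hg) hg
    (p := 2⁻¹) (q := 2⁻¹) (by norm_num) (by norm_num) (by norm_num)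
  calc (∫⁻ x, f x ∂μ) ^ 2
      ≤ ((∫⁻ x, f x ^ 2 / g x ∂μ) ^ (2⁻¹ : ℝ) * (∫⁻ x, g x ∂μ) ^ (2⁻¹ : ℝ)) ^ 2 := by
        rw [hsplit]
        gcongr
        exact hhoelder
    _ = (∫⁻ x, f x ^ 2 / g x ∂μ) * ∫⁻ x, g x ∂μ := by
        rw [← ENNReal.mul_rpow_of_nonneg _ _ (by norm_num), ← ENNReal.rpow_mul_natCast]
        simp

end CauchySchwarz

section Periodic

theorem periodic_deriv {E : Type*} [NormedAddCommGroup E] [NormedSpace ℝ E] {f : ℝ → E} {T : ℝ}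
    (hf : Function.Periodic f T) : Function.Periodic (deriv f) T := fun x => by
  rw [← deriv_comp_add_const, funext hf]

theorem setLIntegral_Ioo_add_eq_of_periodic {f : ℝ → ℝ≥0∞} {T : ℝ} (hf : Function.Periodic f T)
    (hT : 0 < T) (a b : ℝ) : ∫⁻ x in Ioo a (a + T), f x = ∫⁻ x in Ioo b (b + T), f x := by
  simp only [restrict_Ioo_eq_restrict_Ioc]
  exact (isAddFundamentalDomain_Ioc hT a).setLIntegral_eq (isAddFundamentalDomain_Ioc hT b) f
    hf.map_vadd_zmultiples

variable {E : Type*} [NormedAddCommGroup E] [NormedSpace ℝ E] [CompleteSpace E] {f : ℝ → E}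
  {T a x : ℝ}

theorem norm_sub_le_integral_norm_deriv (hf : ContDiff ℝ 1 f) (hax : a ≤ x) :
    ‖f x - f a‖ ≤ ∫ t in a..x, ‖deriv f t‖ := by
  rw [← intervalIntegral.integral_deriv_eq_sub
    (fun t _ => (hf.differentiable one_ne_zero).differentiableAt)
    ((hf.continuous_deriv le_rfl).intervalIntegrable a x)]
  exact intervalIntegral.norm_integral_le_integral_norm hax

/-- Both arcs between `x` and `a` are at least as long as their common chord. -/
theorem two_mul_norm_sub_le_integral_norm_deriv (hf : ContDiff ℝ 1 f) (hT : Function.Periodic f T)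
    (hx : x ∈ Icc a (a + T)) : 2 * ‖f x - f a‖ ≤ ∫ t in a..a + T, ‖deriv f t‖ := by
  have hint (c d : ℝ) : IntervalIntegrable (fun t => ‖deriv f t‖) volume c d :=
    (hf.continuous_deriv le_rfl).norm.intervalIntegrable c d
  have hfst := norm_sub_le_integral_norm_deriv hf hx.1
  have hsnd := norm_sub_le_integral_norm_deriv hf hx.2
  rw [hT, norm_sub_rev] at hsnd
  rw [← intervalIntegral.integral_add_adjacent_intervals (hint a x) (hint x (a + T))]
  linarith

end Periodic

section Chord

variable {E : Type*} [NormedAddCommGroup E] [InnerProductSpace ℝ E] {γ : ℝ → E} {b x : ℝ}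

/-- The unit direction of the chord of `γ` from the pole `γ b` to `γ x`; it is `0` when the two
points coincide. -/
def chordDirection (γ : ℝ → E) (b x : ℝ) : E := normalize (γ x - γ b)

theorem hasDerivAt_chordDirection (hγ : DifferentiableAt ℝ γ x) (hx : γ x ≠ γ b) :
    HasDerivAt (chordDirection γ b)
      (‖γ x - γ b‖⁻¹ • (ℝ ∙ (γ x - γ b))ᗮ.starProjection (deriv γ x)) x :=
  hasDerivAt_normalize (hγ.hasDerivAt.sub_const (γ b)) (sub_ne_zero.2 hx)

theorem norm_deriv_mul_norm_starProjection_chord (hγ : DifferentiableAt ℝ γ x) (hx : γ x ≠ γ b) :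
    ‖deriv γ x‖ * ‖(ℝ ∙ deriv γ x)ᗮ.starProjection (γ x - γ b)‖ =
      ‖γ x - γ b‖ ^ 2 * ‖deriv (chordDirection γ b) x‖ := by
  have hD : ‖γ x - γ b‖ ≠ 0 := norm_ne_zero_iff.2 (sub_ne_zero.2 hx)
  rw [(hasDerivAt_chordDirection hγ hx).deriv, norm_smul, norm_inv, norm_norm,
    norm_mul_norm_starProjection_orthogonal_comm]
  field_simp

theorem contDiffOn_chordDirection {S : Set ℝ} (hγ : ContDiffOn ℝ 1 γ S)
    (hS : ∀ x ∈ S, γ x ≠ γ b) : ContDiffOn ℝ 1 (chordDirection γ b) S := by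
  have hD : ContDiffOn ℝ 1 (fun x => γ x - γ b) S := hγ.sub contDiffOn_const
  have hne : ∀ x ∈ S, γ x - γ b ≠ 0 := fun x hx => sub_ne_zero.2 (hS x hx)
  exact ((hD.norm ℝ hne).inv fun x hx => norm_ne_zero_iff.2 (hne x hx)).smul hD

/-- The chord direction leaves the pole along the tangent and returns along its opposite. -/
theorem ofReal_pi_le_lintegral_enorm_deriv_chordDirection {T : ℝ} (hT : 0 < T)
    (hper : Function.Periodic γ T) (hγ : ContDiff ℝ 1 γ) (hb : deriv γ b ≠ 0)
    (hne : ∀ x ∈ Ioo b (b + T), γ x ≠ γ b) :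
    ENNReal.ofReal π ≤ ∫⁻ x in Ioo b (b + T), ‖deriv (chordDirection γ b) x‖ₑ := by
  have hdiff : Differentiable ℝ γ := hγ.differentiable one_ne_zero
  have hstart : Tendsto (chordDirection γ b) (𝓝[>] b) (𝓝 (normalize (deriv γ b))) :=
    tendsto_normalize_sub_nhdsGT (hdiff b).hasDerivAt hb
  have hend : Tendsto (chordDirection γ b) (𝓝[<] (b + T)) (𝓝 (-normalize (deriv γ b))) := by
    have h := tendsto_normalize_sub_nhdsLT (hdiff (b + T)).hasDerivAt
    rw [periodic_deriv hper, hper] at h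
    exact h hb
  have hunit : ∀ x ∈ Ioo b (b + T), ‖chordDirection γ b x‖ = 1 := fun x hx =>
    norm_normalize_eq_one_iff.2 (sub_ne_zero.2 (hne x hx))
  rw [← angle_self_neg_of_nonzero (normalize_eq_zero_iff _ |>.not.2 hb)]
  exact ofReal_angle_le_lintegral_enorm_deriv_Ioo (by linarith)
    (contDiffOn_chordDirection hγ.contDiffOn hne) hunit hstart hend

theorem pi_sq_le_lintegral_chordDirection_mul_lintegral_enorm_deriv [CompleteSpace E] {T : ℝ}
    (hT : 0 < T) (hper : Function.Periodic γ T) (hγ : ContDiff ℝ 1 γ)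
    (himm : ∀ x, deriv γ x ≠ 0) (hne : ∀ x ∈ Ioo b (b + T), γ x ≠ γ b) :
    ENNReal.ofReal (π ^ 2) ≤
      (∫⁻ x in Ioo b (b + T), ‖deriv (chordDirection γ b) x‖ₑ ^ 2 / ‖deriv γ x‖ₑ) *
        ∫⁻ x in Ioo b (b + T), ‖deriv γ x‖ₑ := by
  borelize E
  rw [ENNReal.ofReal_pow pi_nonneg]
  refine (pow_le_pow_left' (ofReal_pi_le_lintegral_enorm_deriv_chordDirection hT hper hγ (himm b)
    hne) 2).trans ?_
  exact sq_lintegral_le_lintegral_sq_div_mul_lintegral (measurable_deriv _).enorm.aemeasurable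
    (measurable_deriv γ).enorm.aemeasurable (Eventually.of_forall fun x => enorm_ne_zero.2 (himm x))
    (Eventually.of_forall fun x => enorm_ne_top)

end Chord

section TangentPointEnergy

variable {n : ℕ} {γ : ℝ → En n} {s b x : ℝ}

theorem ne_of_periodic_of_injOn_I01 {α : Type*} {f : ℝ → α} (hf : Function.Periodic f 1)
    (hinj : InjOn f I01) (hx : x ∈ Ioo b (b + 1)) : f x ≠ f b := fun h => by
  have hfract (t : ℝ) : f (Int.fract t) = f t := by
    rw [← Int.self_sub_floor]
    simpa only [mul_one] using hf.sub_int_mul_eq ⌊t⌋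
  have hmem (t : ℝ) : Int.fract t ∈ I01 := ⟨Int.fract_nonneg t, Int.fract_lt_one t⟩
  obtain ⟨z, hz⟩ := Int.fract_eq_fract.1
    (hinj (hmem x) (hmem b) ((hfract x).trans (h.trans (hfract b).symm)))
  have hpos : 0 < z := by exact_mod_cast hz ▸ sub_pos.2 hx.1
  have hlt : z < 1 := by exact_mod_cast hz ▸ (sub_lt_iff_lt_add'.2 hx.2)
  omega

theorem setLIntegral_I01_eq_setLIntegral_Ioo {f : ℝ → ℝ≥0∞} (hf : Function.Periodic f 1) (b : ℝ) :
    ∫⁻ x in I01, f x = ∫⁻ x in Ioo b (b + 1), f x := by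
  rw [I01, ← restrict_Ioo_eq_restrict_Ico, ← setLIntegral_Ioo_add_eq_of_periodic hf one_pos 0,
    zero_add]

theorem arcLen_eq_intervalIntegral (hper : Function.Periodic γ 1) (b : ℝ) :
    arcLen γ = ∫ t in b..b + 1, ‖deriv γ t‖ := by
  have hspeed : Function.Periodic (fun t => ‖deriv γ t‖) 1 := (periodic_deriv hper).comp norm
  rw [hspeed.intervalIntegral_add_eq b 0, zero_add, intervalIntegral.integral_of_le zero_le_one,
    ← integral_Ico_eq_integral_Ioc]
  rfl

theorem arcLen_pos (hγ : ContDiff ℝ 1 γ) (himm : ∀ x, deriv γ x ≠ 0)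
    (hper : Function.Periodic γ 1) : 0 < arcLen γ := by
  rw [arcLen_eq_intervalIntegral hper 0]
  exact intervalIntegral.intervalIntegral_pos_of_pos
    ((hγ.continuous_deriv le_rfl).norm.intervalIntegrable _ _)
    (fun x => norm_pos_iff.2 (himm x)) (by norm_num)

theorem lintegral_I01_enorm_deriv (hγ : ContDiff ℝ 1 γ) :
    ∫⁻ x in I01, ‖deriv γ x‖ₑ = ENNReal.ofReal (arcLen γ) := by
  have hint : IntegrableOn (deriv γ) I01 :=
    ((hγ.continuous_deriv le_rfl).integrableOn_Icc (a := 0) (b := 1)).mono_set Ico_subset_Icc_self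
  exact (ofReal_integral_norm_eq_lintegral_enorm hint).symm

theorem norm_Rop_self (s : ℝ) (γ : ℝ → En n) (x b : ℝ) : ‖Rop s γ γ x b‖ =
    (‖γ x - γ b‖ ^ s)⁻¹ * ‖(ℝ ∙ deriv γ x)ᗮ.starProjection (γ x - γ b)‖ := by
  have hproj : γ b - γ x - DDg γ γ x (γ b - γ x) =
      (ℝ ∙ deriv γ x)ᗮ.starProjection (γ b - γ x) := by
    rw [Submodule.starProjection_orthogonal_val, Submodule.starProjection_singleton, DDg,
      inv_mul_eq_div]
    simp only [RCLike.ofReal_real_eq_id, id_eq]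
  rw [Rop, hproj, norm_smul, norm_inv, Real.norm_of_nonneg (by positivity), norm_sub_rev,
    ← neg_sub (γ x), map_neg, norm_neg]

theorem sq_norm_Rop_self_mul_muW (s : ℝ) (hγ : DifferentiableAt ℝ γ x) (himm : deriv γ x ≠ 0)
    (hx : γ x ≠ γ b) : ‖Rop s γ γ x b‖ ^ 2 * muW γ x b * ‖γ x - γ b‖ ^ (2 * s - 3) =
      ‖deriv (chordDirection γ b) x‖ ^ 2 / ‖deriv γ x‖ * ‖deriv γ b‖ := by
  have hD : 0 < ‖γ x - γ b‖ := norm_pos_iff.2 (sub_ne_zero.2 hx)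
  have hspeed : ‖deriv γ x‖ ≠ 0 := norm_ne_zero_iff.2 himm
  have hproj : ‖(ℝ ∙ deriv γ x)ᗮ.starProjection (γ x - γ b)‖ =
      ‖γ x - γ b‖ ^ 2 * ‖deriv (chordDirection γ b) x‖ / ‖deriv γ x‖ := by
    rw [eq_div_iff hspeed, mul_comm, norm_deriv_mul_norm_starProjection_chord hγ hx]
  have hpow : ‖γ x - γ b‖ ^ (2 * s - 3) = (‖γ x - γ b‖ ^ s) ^ 2 / ‖γ x - γ b‖ ^ 3 := by
    rw [Real.rpow_sub hD, mul_comm, Real.rpow_mul hD.le]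
    norm_cast
  rw [norm_Rop_self, hproj, hpow, muW, norm_sub_rev (γ b)]
  field_simp

/-- The integrand of the tangent-point energy with respect to `λ ⊗ λ`, kept in `[0,∞]` so that
the order of integration may be exchanged freely. -/
def energyDensity (s : ℝ) (γ : ℝ → En n) (x y : ℝ) : ℝ≥0∞ :=
  ENNReal.ofReal (‖Rop s γ γ x y‖ ^ 2 * muW γ x y)

theorem enorm_deriv_chordDirection_sq_div_mul_le_energyDensity_mul (hs : 3 / 2 ≤ s)
    (hγ : DifferentiableAt ℝ γ x) (himm : deriv γ x ≠ 0) (hx : γ x ≠ γ b) {r : ℝ}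
    (hr : ‖γ x - γ b‖ ≤ r) :
    ‖deriv (chordDirection γ b) x‖ₑ ^ 2 / ‖deriv γ x‖ₑ * ‖deriv γ b‖ₑ ≤
      energyDensity s γ x b * ENNReal.ofReal (r ^ (2 * s - 3)) := by
  have hmuW : 0 ≤ muW γ x b := by unfold muW; positivity
  simp only [← ofReal_norm]
  rw [energyDensity, ← ENNReal.ofReal_pow (norm_nonneg _),
    ← ENNReal.ofReal_div_of_pos (norm_pos_iff.2 himm), ← ENNReal.ofReal_mul (by positivity),
    ← ENNReal.ofReal_mul (by positivity), ← sq_norm_Rop_self_mul_muW s hγ himm hx]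
  gcongr
  linarith

theorem measurable_uncurry_energyDensity (s : ℝ) (hγ : Measurable γ) :
    Measurable (Function.uncurry (energyDensity s γ)) := by
  unfold Function.uncurry energyDensity Rop muW DDg
  fun_prop

theorem EtpE_eq_lintegral_lintegral_pole (s : ℝ) (hγ : Measurable γ) :
    EtpE s γ = ∫⁻ b in I01, ∫⁻ x in I01, energyDensity s γ x b :=
  lintegral_lintegral_swap (measurable_uncurry_energyDensity s hγ).aemeasurable

theorem pi_sq_mul_enorm_deriv_le_lintegral_energyDensity_mul (hs : 3 / 2 ≤ s)
    (hper : Function.Periodic γ 1) (hγ : ContDiff ℝ 1 γ) (hinj : InjOn γ I01)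
    (himm : ∀ x, deriv γ x ≠ 0) (b : ℝ) :
    ENNReal.ofReal (π ^ 2) * ‖deriv γ b‖ₑ ≤
      (∫⁻ x in I01, energyDensity s γ x b) * ENNReal.ofReal ((arcLen γ / 2) ^ (2 * s - 3)) *
        ENNReal.ofReal (arcLen γ) := by
  have hne : ∀ x ∈ Ioo b (b + 1), γ x ≠ γ b := fun x => ne_of_periodic_of_injOn_I01 hper hinj
  have hchord : ∀ x ∈ Ioo b (b + 1), ‖γ x - γ b‖ ≤ arcLen γ / 2 := fun x hx => by
    have := two_mul_norm_sub_le_integral_norm_deriv hγ hper (Ioo_subset_Icc_self hx)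
    rw [← arcLen_eq_intervalIntegral hper] at this
    linarith
  have hdens : Function.Periodic (fun x => energyDensity s γ x b) 1 := fun x => by
    simp only [energyDensity, Rop, DDg, muW, hper x, periodic_deriv hper x]
  have hspeed : Function.Periodic (fun x => ‖deriv γ x‖ₑ) 1 := (periodic_deriv hper).comp _
  rw [← lintegral_I01_enorm_deriv hγ, setLIntegral_I01_eq_setLIntegral_Ioo hdens b,
    setLIntegral_I01_eq_setLIntegral_Ioo hspeed b]
  set I := Ioo b (b + 1)
  calc ENNReal.ofReal (π ^ 2) * ‖deriv γ b‖ₑ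
      ≤ (∫⁻ x in I, ‖deriv (chordDirection γ b) x‖ₑ ^ 2 / ‖deriv γ x‖ₑ) *
          (∫⁻ x in I, ‖deriv γ x‖ₑ) * ‖deriv γ b‖ₑ := by
        gcongr
        exact pi_sq_le_lintegral_chordDirection_mul_lintegral_enorm_deriv one_pos hper hγ himm hne
    _ = (∫⁻ x in I, ‖deriv (chordDirection γ b) x‖ₑ ^ 2 / ‖deriv γ x‖ₑ * ‖deriv γ b‖ₑ) *
          ∫⁻ x in I, ‖deriv γ x‖ₑ := by
        rw [lintegral_mul_const' _ _ enorm_ne_top, mul_right_comm]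
    _ ≤ (∫⁻ x in I, energyDensity s γ x b *
          ENNReal.ofReal ((arcLen γ / 2) ^ (2 * s - 3))) * ∫⁻ x in I, ‖deriv γ x‖ₑ := by
        gcongr ?_ * _
        exact setLIntegral_mono' measurableSet_Ioo fun x hx =>
          enorm_deriv_chordDirection_sq_div_mul_le_energyDensity_mul hs
            (hγ.differentiable one_ne_zero x) (himm x) (hne x hx) (hchord x hx)
    _ = (∫⁻ x in I, energyDensity s γ x b) *
          ENNReal.ofReal ((arcLen γ / 2) ^ (2 * s - 3)) * ∫⁻ x in I, ‖deriv γ x‖ₑ := by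
        rw [lintegral_mul_const' _ _ ENNReal.ofReal_ne_top]

end TangentPointEnergy

theorem statement3_general (s : ℝ) (hs : 3 / 2 ≤ s) (n : ℕ) (γ : ℝ → En n)
    (hper : Function.Periodic γ 1) (hγ : ContDiff ℝ 1 γ) (hinj : InjOn γ I01)
    (himm : ∀ x, deriv γ x ≠ 0) :
    ENNReal.ofReal (π ^ 2) ≤ EtpE s γ * ENNReal.ofReal ((arcLen γ / 2) ^ (2 * s - 3)) := by
  have hL : ENNReal.ofReal (arcLen γ) ≠ 0 := (ENNReal.ofReal_pos.2 (arcLen_pos hγ himm hper)).ne'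
  refine (ENNReal.mul_le_mul_iff_left hL ENNReal.ofReal_ne_top).1 ?_
  calc ENNReal.ofReal (π ^ 2) * ENNReal.ofReal (arcLen γ)
      = ∫⁻ b in I01, ENNReal.ofReal (π ^ 2) * ‖deriv γ b‖ₑ := by
        rw [lintegral_const_mul' _ _ ENNReal.ofReal_ne_top, lintegral_I01_enorm_deriv hγ]
    _ ≤ ∫⁻ b in I01, (∫⁻ x in I01, energyDensity s γ x b) *
          ENNReal.ofReal ((arcLen γ / 2) ^ (2 * s - 3)) * ENNReal.ofReal (arcLen γ) :=
        lintegral_mono fun b =>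
          pi_sq_mul_enorm_deriv_le_lintegral_energyDensity_mul hs hper hγ hinj himm b
    _ = EtpE s γ * ENNReal.ofReal ((arcLen γ / 2) ^ (2 * s - 3)) * ENNReal.ofReal (arcLen γ) := by
        rw [lintegral_mul_const' _ _ ENNReal.ofReal_ne_top,
          lintegral_mul_const' _ _ ENNReal.ofReal_ne_top,
          EtpE_eq_lintegral_lintegral_pole s hγ.continuous.measurable]

/-- lower energy bound: for `s ∈ (3/2,2)`, every embedded curve
`γ ∈ H^s(𝕋,ℝⁿ)` satisfies `π² ≤ E(γ) · L(γ)^{2s−3}`. -/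
theorem statement3 (s : ℝ) (hs : s ∈ Set.Ioo (3 / 2 : ℝ) 2) (n : ℕ) (hn : 2 ≤ n)
    (γ : ℝ → En n) (hγ : InM s γ) :
    ENNReal.ofReal (Real.pi ^ 2) ≤ EtpE s γ * ENNReal.ofReal (arcLen γ ^ (2 * s - 3)) := by
  obtain ⟨⟨hper, hC, -⟩, hinj, himm⟩ := hγ
  refine (statement3_general s hs.1.le n γ hper hC hinj himm).trans ?_
  gcongr
  all_goals linarith [arcLen_pos hC himm hper, hs.1]
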